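/- arXiv:2505.19309 — 4 statements merged into one kernel-verified Lean document; each statement's English description precedes it below -/
import Mathlib

section
/- The non-HARA utility U(x) = (1/3)·H(x)^{−3} + H(x)^{−1} + x·H(x) is differentiable on (0,∞) with marginal utility U'(x) = H(x) for every x > 0. -/
open Set Filter

/-- The non-HARA utility `U(x) = (1/3) H(x)⁻³ + H(x)⁻¹ + x H(x)` is differentiable on
`(0,∞)` with marginal utility `U'(x) = H(x)`. -/
theorem nonHARA_marginal_utility
    (H U : ℝ → ℝ)
    (hH : ∀ x : ℝ, H x = Real.sqrt (2 / (-1 + Real.sqrt (1 + 4 * x))))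
    (hU : ∀ x : ℝ, U x = (1 / 3) * (H x) ^ (-3 : ℤ) + (H x)⁻¹ + x * H x) :
    ∀ x : ℝ, 0 < x → HasDerivAt U (H x) x := by
  intro x hx
  have hs : 1 < Real.sqrt (1 + 4 * x) := by
    rw [Real.lt_sqrt (by norm_num)]; linarith
  have hs2 : Real.sqrt (1 + 4 * x) ^ 2 = 1 + 4 * x := Real.sq_sqrt (by linarith)
  have hd : 0 < -1 + Real.sqrt (1 + 4 * x) := by linarith
  have hq : 0 < 2 / (-1 + Real.sqrt (1 + 4 * x)) := by positivity
  have hpos : 0 < H x := by rw [hH]; exact Real.sqrt_pos.2 hq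
  have hsq : H x ^ 2 = 2 / (-1 + Real.sqrt (1 + 4 * x)) := by
    rw [hH]; exact Real.sq_sqrt hq.le
  have hdiff : DifferentiableAt ℝ H x := by
    rw [funext hH]
    have h0 : DifferentiableAt ℝ (fun y : ℝ => 1 + 4 * y) x := by fun_prop
    have h1 : DifferentiableAt ℝ (fun y : ℝ => -1 + Real.sqrt (1 + 4 * y)) x :=
      (h0.sqrt (by linarith)).const_add _
    exact ((differentiableAt_const (2 : ℝ)).div h1 hd.ne').sqrt hq.ne'
  have hD := hdiff.hasDerivAt
  have hx4 : x * H x ^ 4 = 1 + H x ^ 2 := by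
    have : H x ^ 4 = (H x ^ 2) ^ 2 := by ring
    rw [this, hsq]
    clear hdiff hD this hsq hq
    generalize Real.sqrt (1 + 4 * x) = s at *
    have hd' := hd.ne'
    field_simp
    nlinarith
  have hne := hpos.ne'
  have h3 : HasDerivAt (fun y => (H y) ^ (-3 : ℤ)) _ x :=
    (hasDerivAt_zpow (-3) (H x) (Or.inl hne)).comp x hD
  rw [funext hU]
  refine (((h3.const_mul (1 / 3)).add (hD.inv hne)).add ((hasDerivAt_id x).mul hD)).congr_deriv ?_
  have e : (H x) ^ ((-3 : ℤ) - 1) = (H x ^ 4)⁻¹ := by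
    rw [show (-3 : ℤ) - 1 = -(4 : ℕ) by norm_num, zpow_neg, zpow_natCast]
  rw [e]
  have hx' : x = (1 + H x ^ 2) / H x ^ 4 := by
    field_simp; exact hx4
  generalize deriv H x = d at *
  generalize H x = h at *
  simp only [id]
  push_cast
  rw [hx']
  field_simp
  ring
end

section
/- The non-HARA utility U(x) = (1/3)·H(x)^{−3} + H(x)^{−1} + x·H(x) satisfies the utility conditions: it is strictly increasing and strictly concave on (0,∞), lim_{x→0+} U(x) = 0, lim_{x→∞} U(x) = +∞, lim_{x→0+} U'(x) = +∞, lim_{x→∞} U'(x) = 0, and there exists a constant C > 0 such that U(x) ≤ C·(1 + x^{3/4}) for all x > 0. -/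
open Set Filter

noncomputable def PP (x : ℝ) : ℝ := Real.sqrt ((-1 + Real.sqrt (1 + 4 * x)) / 2)

lemma sq1 {x : ℝ} (hx : 0 < x) : 1 < Real.sqrt (1 + 4 * x) := by
  rw [Real.lt_sqrt (by norm_num)]; linarith

lemma PP_pos {x : ℝ} (hx : 0 < x) : 0 < PP x := by
  have := sq1 hx
  exact Real.sqrt_pos.2 (by linarith)

lemma PP_sq {x : ℝ} (hx : 0 < x) : PP x ^ 2 = (-1 + Real.sqrt (1 + 4 * x)) / 2 := by
  have := sq1 hx
  exact Real.sq_sqrt (by linarith)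

lemma PP_eq {x : ℝ} (hx : 0 < x) : PP x ^ 4 + PP x ^ 2 = x := by
  have h : PP x ^ 4 = (PP x ^ 2) ^ 2 := by ring
  have h2 : Real.sqrt (1 + 4 * x) ^ 2 = 1 + 4 * x := Real.sq_sqrt (by linarith)
  rw [h, PP_sq hx]
  linarith

lemma PP_mono : StrictMonoOn PP (Ioi 0) := by
  intro x hx y hy hxy
  have h1 := sq1 hx
  have h2 : Real.sqrt (1 + 4 * x) < Real.sqrt (1 + 4 * y) :=
    Real.sqrt_lt_sqrt (by have : 0 < x := hx; linarith) (by linarith)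
  exact Real.sqrt_lt_sqrt (by linarith) (by linarith)

lemma PP_deriv {x : ℝ} (hx : 0 < x) :
    HasDerivAt PP (1 / (Real.sqrt (1 + 4 * x) * (2 * PP x))) x := by
  have h1 := sq1 hx
  have a : HasDerivAt (fun x : ℝ => 1 + 4 * x) 4 x := by
    simpa using ((hasDerivAt_id x).const_mul 4).const_add 1
  have b := (((a.sqrt (by linarith)).const_add (-1)).div_const 2).sqrt (by
    have : 0 < (-1 + Real.sqrt (1 + 4 * x)) / 2 := by linarith
    exact this.ne')
  have hp := PP_pos hx
  refine b.congr_deriv ?_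
  change _ / (2 * PP x) = _
  field_simp
  norm_num

lemma PP_cont : Continuous PP := by unfold PP; fun_prop

lemma PP_zero : Tendsto PP (nhdsWithin 0 (Ioi 0)) (nhds 0) := by
  have h := PP_cont.tendsto 0
  have h0 : PP 0 = 0 := by simp [PP]
  rw [h0] at h
  exact h.mono_left nhdsWithin_le_nhds

lemma PP_top : Tendsto PP atTop atTop := by
  have a : Tendsto (fun x : ℝ => 1 + 4 * x) atTop atTop :=
    tendsto_atTop_add_const_left _ _ (tendsto_id.const_mul_atTop (by norm_num))
  have b := Real.tendsto_sqrt_atTop.comp a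
  exact Real.tendsto_sqrt_atTop.comp
    ((tendsto_atTop_add_const_left _ (-1) b).atTop_div_const (by norm_num))

/-- The non-HARA utility satisfies the utility conditions: strictly increasing, strictly
concave on `(0,∞)`, with `U → 0` at `0+`, `U → ∞` at `∞`, `U' → ∞` at `0+`, `U' → 0` at `∞`,
and polynomial growth of order `3/4`. -/
theorem nonHARA_utility_conditions
    (H U : ℝ → ℝ)
    (hH : ∀ x : ℝ, H x = Real.sqrt (2 / (-1 + Real.sqrt (1 + 4 * x))))
    (hU : ∀ x : ℝ, U x = (1 / 3) * (H x) ^ (-3 : ℤ) + (H x)⁻¹ + x * H x) :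
    StrictMonoOn U (Ioi 0) ∧
    StrictConcaveOn ℝ (Ioi 0) U ∧
    Tendsto U (nhdsWithin 0 (Ioi 0)) (nhds 0) ∧
    Tendsto U atTop atTop ∧
    Tendsto (deriv U) (nhdsWithin 0 (Ioi 0)) atTop ∧
    Tendsto (deriv U) atTop (nhds 0) ∧
    ∃ C : ℝ, 0 < C ∧ ∀ x : ℝ, 0 < x → U x ≤ C * (1 + x ^ (3 / 4 : ℝ)) := by
  have hHP : ∀ x, H x = (PP x)⁻¹ := by
    intro x
    rw [hH, PP, ← Real.sqrt_inv, inv_div]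
  have hUP : ∀ x, 0 < x → U x = 4 / 3 * PP x ^ 3 + 2 * PP x := by
    intro x hx
    have hp := PP_pos hx
    have he := PP_eq hx
    have h1 : x * (PP x)⁻¹ = PP x ^ 3 + PP x := by
      rw [← div_eq_mul_inv, div_eq_iff hp.ne']
      linarith
    have h2 : ((PP x)⁻¹) ^ (-3 : ℤ) = PP x ^ 3 := by
      rw [inv_zpow', neg_neg]; norm_cast
    rw [hU, hHP, h1, h2, inv_inv]
    ring
  have hD : ∀ x, 0 < x → HasDerivAt U (PP x)⁻¹ x := by
    intro x hx
    have hp := PP_pos hx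
    have hd := PP_deriv hx
    have h1 := sq1 hx
    have h2 := PP_sq hx
    have h3 := ((hd.pow 3).const_mul (4 / 3)).add (hd.const_mul 2)
    have hs : Real.sqrt (1 + 4 * x) = 2 * PP x ^ 2 + 1 := by linarith
    have h4 : HasDerivAt (fun x => 4 / 3 * PP x ^ 3 + 2 * PP x) (PP x)⁻¹ x := by
      refine h3.congr_deriv ?_
      rw [hs]
      have : 2 * PP x ^ 2 + 1 ≠ 0 := by positivity
      field_simp
      push_cast
      ring
    refine h4.congr_of_eventuallyEq ?_
    filter_upwards [Ioi_mem_nhds hx] with y hy using hUP y hy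
  have hd : ∀ x, 0 < x → deriv U x = (PP x)⁻¹ := fun x hx => (hD x hx).deriv
  have e0 : ∀ᶠ x : ℝ in nhdsWithin 0 (Ioi 0), 0 < x := eventually_mem_nhdsWithin
  have e1 : ∀ᶠ x : ℝ in atTop, 0 < x := eventually_gt_atTop 0
  refine ⟨?_, ?_, ?_, ?_, ?_, ?_, 4, by norm_num, ?_⟩
  · intro x hx y hy hxy
    have h := PP_mono hx hy hxy
    have hp := PP_pos hx
    rw [hUP x hx, hUP y hy]
    have := pow_lt_pow_left₀ h hp.le (n := 3) (by norm_num)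
    linarith
  · apply StrictAntiOn.strictConcaveOn_of_deriv (convex_Ioi 0)
    · exact fun x hx => (hD x hx).continuousAt.continuousWithinAt
    · rw [interior_Ioi]
      intro x hx y hy hxy
      rw [hd x hx, hd y hy]
      exact inv_strictAnti₀ (PP_pos hx) (PP_mono hx hy hxy)
  · have h := ((PP_zero.pow 3).const_mul (4 / 3)).add (PP_zero.const_mul 2)
    norm_num at h
    refine h.congr' ?_
    filter_upwards [e0] with x hx using (hUP x hx).symm
  · refine tendsto_atTop_mono' _ ?_ PP_top
    filter_upwards [e1] with x hx
    have hp := PP_pos hx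
    rw [hUP x hx]
    have : 0 < PP x ^ 3 := by positivity
    linarith
  · have h : Tendsto PP (nhdsWithin 0 (Ioi 0)) (nhdsWithin 0 (Ioi 0)) :=
      tendsto_nhdsWithin_iff.2 ⟨PP_zero, e0.mono fun x hx => PP_pos hx⟩
    refine (tendsto_inv_nhdsGT_zero.comp h).congr' ?_
    filter_upwards [e0] with x hx using (hd x hx).symm
  · refine (tendsto_inv_atTop_zero.comp PP_top).congr' ?_
    filter_upwards [e1] with x hx using (hd x hx).symm
  · intro x hx
    have hp := PP_pos hx
    have he := PP_eq hx
    have h1 : PP x ^ 3 ≤ x ^ (3 / 4 : ℝ) := by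
      have : (PP x ^ 4) ^ (3 / 4 : ℝ) = PP x ^ 3 := by
        rw [← Real.rpow_natCast, ← Real.rpow_mul hp.le, ← Real.rpow_natCast]
        norm_num
      rw [← this]
      exact Real.rpow_le_rpow (by positivity) (by nlinarith [sq_nonneg (PP x)]) (by norm_num)
    have h2 : PP x ≤ 1 + PP x ^ 3 := by
      nlinarith [mul_nonneg hp.le (sq_nonneg (PP x - 1)), sq_nonneg (PP x - 1)]
    have h3 : 0 < PP x ^ 3 := by positivity
    rw [hUP x hx]
    linarith
end

section
/- For the non-HARA utility and any K > 0, the dual utility is given explicitly by Ũ_K(y) = sup_{x>K} { U(x−K) − x·y } = (1/3)·y^{−3} + y^{−1} − K·y for every y > 0, with the supremum attained at x = K + y^{−2} + y^{−4}. -/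
open Set Filter

/-- For the non-HARA utility and any `K > 0`, the dual utility is
`Ũ_K(y) = (1/3) y⁻³ + y⁻¹ - K y`, the supremum being attained at `x* = K + y⁻² + y⁻⁴`. -/
theorem nonHARA_utility_dual
    (K : ℝ) (hK : 0 < K)
    (H U : ℝ → ℝ)
    (hH : ∀ x : ℝ, H x = Real.sqrt (2 / (-1 + Real.sqrt (1 + 4 * x))))
    (hU : ∀ x : ℝ, 0 < x → U x = (1 / 3) * (H x) ^ (-3 : ℤ) + (H x)⁻¹ + x * H x)
    (hU0 : U 0 = 0) :
    ∀ y : ℝ, 0 < y →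
      IsGreatest {v : ℝ | ∃ x : ℝ, K < x ∧ v = U (x - K) - x * y}
        ((1 / 3) * y ^ (-3 : ℤ) + y⁻¹ - K * y) ∧
      sSup {v : ℝ | ∃ x : ℝ, K < x ∧ v = U (x - K) - x * y}
        = (1 / 3) * y ^ (-3 : ℤ) + y⁻¹ - K * y ∧
      K < K + y ^ (-2 : ℤ) + y ^ (-4 : ℤ) ∧
      U (K + y ^ (-2 : ℤ) + y ^ (-4 : ℤ) - K) - (K + y ^ (-2 : ℤ) + y ^ (-4 : ℤ)) * y
        = (1 / 3) * y ^ (-3 : ℤ) + y⁻¹ - K * y := by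
  have key : ∀ t : ℝ, 0 < t → U (t ^ 2 + t ^ 4) = 4 / 3 * t ^ 3 + 2 * t := by
    intro t ht
    have h1 : Real.sqrt (1 + 4 * (t ^ 2 + t ^ 4)) = 2 * t ^ 2 + 1 := by
      rw [show 1 + 4 * (t ^ 2 + t ^ 4) = (2 * t ^ 2 + 1) ^ 2 by ring]
      exact Real.sqrt_sq (by positivity)
    have h2 : H (t ^ 2 + t ^ 4) = t⁻¹ := by
      rw [hH, h1, show 2 / (-1 + (2 * t ^ 2 + 1)) = (t⁻¹) ^ 2 by field_simp; ring]
      exact Real.sqrt_sq (by positivity)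
    rw [hU _ (by positivity), h2, inv_zpow, zpow_neg, inv_inv, inv_inv]
    rw [show t ^ (3 : ℤ) = t ^ 3 by norm_cast]
    field_simp
    ring
  have ex : ∀ x : ℝ, 0 < x → ∃ t : ℝ, 0 < t ∧ x = t ^ 2 + t ^ 4 := by
    intro x hx
    have hs : 1 < Real.sqrt (1 + 4 * x) := by
      rw [Real.lt_sqrt (by norm_num)]
      linarith
    have hq := Real.sq_sqrt (show 0 ≤ 1 + 4 * x by linarith)
    refine ⟨Real.sqrt ((Real.sqrt (1 + 4 * x) - 1) / 2), Real.sqrt_pos.2 (by linarith), ?_⟩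
    have h2 := Real.sq_sqrt (show 0 ≤ (Real.sqrt (1 + 4 * x) - 1) / 2 by linarith)
    rw [show ∀ a : ℝ, a ^ 4 = (a ^ 2) ^ 2 by intro a; ring, h2]
    nlinarith
  intro y hy
  obtain ⟨s, hs, rfl⟩ : ∃ s : ℝ, 0 < s ∧ y = s⁻¹ := ⟨y⁻¹, by positivity, by simp⟩
  have e2 : (s⁻¹) ^ (-2 : ℤ) = s ^ 2 := by
    rw [inv_zpow, zpow_neg, inv_inv]; norm_cast
  have e3 : (s⁻¹) ^ (-3 : ℤ) = s ^ 3 := by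
    rw [inv_zpow, zpow_neg, inv_inv]; norm_cast
  have e4 : (s⁻¹) ^ (-4 : ℤ) = s ^ 4 := by
    rw [inv_zpow, zpow_neg, inv_inv]; norm_cast
  rw [e2, e3, e4, inv_inv]
  have hlt : K < K + s ^ 2 + s ^ 4 := by
    have : 0 < s ^ 2 + s ^ 4 := by positivity
    linarith
  have hval : U (K + s ^ 2 + s ^ 4 - K) - (K + s ^ 2 + s ^ 4) * s⁻¹
      = 1 / 3 * s ^ 3 + s - K * s⁻¹ := by
    rw [show K + s ^ 2 + s ^ 4 - K = s ^ 2 + s ^ 4 by ring, key s hs]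
    field_simp
    ring
  have hG : IsGreatest {v : ℝ | ∃ x : ℝ, K < x ∧ v = U (x - K) - x * s⁻¹}
      (1 / 3 * s ^ 3 + s - K * s⁻¹) := by
    refine ⟨⟨_, hlt, hval.symm⟩, ?_⟩
    rintro v ⟨x, hx, rfl⟩
    obtain ⟨t, ht, hxt⟩ := ex (x - K) (by linarith)
    rw [hxt, key t ht, show x = K + (t ^ 2 + t ^ 4) by linarith, ← sub_nonneg]
    have : 1 / 3 * s ^ 3 + s - K * s⁻¹ - (4 / 3 * t ^ 3 + 2 * t - (K + (t ^ 2 + t ^ 4)) * s⁻¹)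
        = (s - t) ^ 2 * (1 + (s ^ 2 + 2 * s * t + 3 * t ^ 2) / 3) * s⁻¹ := by
      field_simp
      ring
    rw [this]
    positivity
  exact ⟨hG, hG.csSup_eq, hlt, hval⟩
end

section
/- Let U be a utility function, K > 0, and Ũ_K(y) = sup_{x>K}{U(x−K) − x·y}. Let w : (0,∞) → ℝ be continuously differentiable and strictly convex with w ≥ Ũ_K on (0,∞), −w'(y) → +∞ as y → 0+ and −w'(y) → K̂ ≤ K as y → ∞ for some 0 < K̂ ≤ K. Fix x > K and let y* be the unique root of w'(y) + x = 0 (the minimizer of y ↦ w(y)+x·y). If w(y*) = Ũ_K(y*) (the conjugate point lies in the stopping region), then Ũ_K'(y*) = w'(y*) = −x and inf_{y>0}{ w(y) + x·y } = Ũ_K(y*) + x·y* = U(x − K). -/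
open Set Filter

/-- In the stopping region: if the conjugate point `y*` of `w` satisfies `w(y*) = Ũ_K(y*)`,
then `Ũ_K'(y*) = w'(y*) = -x` and `inf_{y>0} { w(y) + x*y } = Ũ_K(y*) + x*y* = U(x - K)`. -/
theorem stopping_region_contact
    (U : ℝ → ℝ) (C p K Khat : ℝ)
    (hK : 0 < K)
    (hU0 : U 0 = 0)
    (hUcont : ContinuousOn U (Ici 0))
    (hUC2 : ContDiffOn ℝ 2 U (Ioi 0))
    (hUmono : StrictMonoOn U (Ici 0))
    (hUconc : StrictConcaveOn ℝ (Ici 0) U)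
    (hUinf : Tendsto U atTop atTop)
    (hU'0 : Tendsto (deriv U) (nhdsWithin 0 (Ioi 0)) atTop)
    (hU'inf : Tendsto (deriv U) atTop (nhds 0))
    (hC : 0 < C) (hp0 : 0 < p) (hp1 : p < 1)
    (hgrowth : ∀ x : ℝ, 0 ≤ x → U x ≤ C * (1 + x ^ p))
    (UK : ℝ → ℝ)
    (hUK : ∀ y : ℝ, UK y = sSup {v : ℝ | ∃ x : ℝ, K < x ∧ v = U (x - K) - x * y})
    (w w' : ℝ → ℝ)
    (hw' : ∀ y : ℝ, 0 < y → HasDerivAt w (w' y) y)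
    (hw'cont : ContinuousOn w' (Ioi 0))
    (hconv : StrictConvexOn ℝ (Ioi 0) w)
    (hdom : ∀ y : ℝ, 0 < y → UK y ≤ w y)
    (hKhat0 : 0 < Khat) (hKhatK : Khat ≤ K)
    (hlim0 : Tendsto (fun y => -(w' y)) (nhdsWithin 0 (Ioi 0)) atTop)
    (hlimtop : Tendsto (fun y => -(w' y)) atTop (nhds Khat))
    (x : ℝ) (hx : K < x)
    (ystar : ℝ) (hystar : 0 < ystar) (hroot : w' ystar + x = 0)
    (hcontact : w ystar = UK ystar) :
    deriv UK ystar = w' ystar ∧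
    w' ystar = -x ∧
    sInf {v : ℝ | ∃ y : ℝ, 0 < y ∧ v = w y + x * y} = UK ystar + x * ystar ∧
    UK ystar + x * ystar = U (x - K) := by
  have hdiff : ∀ z, 0 < z → HasDerivAt U (deriv U z) z := fun z hz =>
    ((hUC2.differentiableOn (by norm_num)).differentiableAt (Ioi_mem_nhds hz)).hasDerivAt
  have hdc : ContinuousOn (deriv U) (Ioi 0) :=
    hUC2.continuousOn_deriv_of_isOpen isOpen_Ioi (by norm_num)
  have key : ∀ y, 0 < y → ∃ z, 0 < z ∧ ∀ t, 0 < t → U t ≤ U z + y * (t - z) := by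
    intro y hy
    obtain ⟨a, ha, ha0⟩ := ((hU'0.eventually_ge_atTop y).and self_mem_nhdsWithin).exists
    obtain ⟨b, hb, hb0⟩ := ((hU'inf.eventually_le_const hy).and (eventually_gt_atTop 0)).exists
    obtain ⟨z, hz, hzy⟩ := isPreconnected_Ioi.intermediate_value (s := Ioi (0:ℝ)) hb0 ha0 hdc ⟨hb, ha⟩
    have hz0 : 0 < z := hz
    refine ⟨z, hz, fun t ht => ?_⟩
    have hd := hdiff z hz
    rw [hzy] at hd
    rcases lt_trichotomy t z with h | h | h
    · have := hUconc.concaveOn.le_slope_of_hasDerivAt (mem_Ici.2 ht.le) (mem_Ici.2 hz0.le) h hd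
      rw [slope_def_field, le_div_iff₀ (by linarith)] at this
      linarith
    · subst h; simp
    · have := hUconc.concaveOn.slope_le_of_hasDerivAt (mem_Ici.2 hz0.le) (mem_Ici.2 ht.le) h hd
      rw [slope_def_field, div_le_iff₀ (by linarith)] at this
      linarith
  have hge : ∀ y, 0 < y → ∀ s, K < s → U (s - K) - s * y ≤ UK y := by
    intro y hy s hs
    obtain ⟨z, hz, h⟩ := key y hy
    rw [hUK]
    refine le_csSup ⟨U z - (z + K) * y, ?_⟩ ⟨s, hs, rfl⟩
    rintro _ ⟨r, hr, rfl⟩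
    have := h (r - K) (by linarith)
    linarith
  obtain ⟨z, hz, h⟩ := key ystar hystar
  have heq : UK ystar = U z - (z + K) * ystar := by
    apply le_antisymm
    · rw [hUK]
      refine csSup_le ⟨_, x, hx, rfl⟩ ?_
      rintro _ ⟨r, hr, rfl⟩
      have := h (r - K) (by linarith)
      linarith
    · have := hge ystar hystar (z + K) (by linarith)
      simpa using this
  have hline : ∀ y, 0 < y → UK ystar - (z + K) * (y - ystar) ≤ UK y := by
    intro y hy
    have := hge y hy (z + K) (by linarith)
    rw [add_sub_cancel_right] at this
    linarith
  have hmin : IsLocalMin (fun y => w y + (z + K) * y) ystar := by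
    filter_upwards [Ioi_mem_nhds hystar] with y hy
    have := hline y hy
    have := hdom y hy
    linarith
  have hder := hmin.hasDerivAt_eq_zero
    ((hw' ystar hystar).add ((hasDerivAt_id ystar).const_mul (z + K)))
  have hxz : x = z + K := by linarith
  rw [← hxz] at heq hline
  have hd0 : HasDerivAt UK (w' ystar) ystar := by
    have hw0 := hw' ystar hystar
    rw [hasDerivAt_iff_isLittleO] at hw0 ⊢
    refine Asymptotics.IsBigO.trans_isLittleO (Asymptotics.IsBigO.of_bound 1 ?_) hw0
    filter_upwards [Ioi_mem_nhds hystar] with y hy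
    have h1 := hline y hy
    have h2 := hdom y hy
    have e : w' ystar = -x := by linarith
    simp only [smul_eq_mul, Real.norm_eq_abs, e, one_mul]
    rw [abs_of_nonneg (by linarith), abs_of_nonneg (by linarith)]
    linarith
  refine ⟨hd0.deriv, by linarith, ?_, ?_⟩
  · apply IsLeast.csInf_eq
    refine ⟨⟨ystar, hystar, by rw [hcontact]⟩, ?_⟩
    rintro _ ⟨y, hy, rfl⟩
    have := hline y hy
    have := hdom y hy
    linarith
  · rw [heq, show x - K = z by linarith]; ring
end
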